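/- Let u be an information structure on K × (C×C₁) × (D×D₁), and define v = marg_{K×C×(D×D₁)}u, u' = marg_{K×(C×C₁)×D}u, v' = marg_{K×C×D}u. If under u player 1's joint signal (c, c₁) and player 2's signal d are conditionally independent given the state k, then d(u', v') ≤ d(u, v): player 1's extra signal c₁ is more valuable when player 2 also receives the extra signal d₁ (informational complements). -/

import Mathlib

open scoped BigOperators ENNReal

namespace ValueDistance

/-- An information structure: a probability distribution on `K × ℕ × ℕ`
(state, signal of player 1, signal of player 2). -/
abbrev InfoStruct (K : Type) := PMF (K × ℕ × ℕ)

/-- A behavior strategy / garbling : a map `ℕ → Δ(ℕ)`. -/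
abbrev Garbling : Type := ℕ → PMF ℕ

variable {K : Type}

/-- `g` is a payoff function with action bound `L` : values in `[-1,1]`,
`g k i j = -1` when `i ≥ L`, and `g k i j = 1` when `i < L` and `j ≥ L`. -/
def IsPayoffL (L : ℕ) (g : K → ℕ → ℕ → ℝ) : Prop :=
  (∀ k i j, g k i j ∈ Set.Icc (-1 : ℝ) 1) ∧
  (∀ k i j, L ≤ i → g k i j = -1) ∧
  (∀ k i j, i < L → L ≤ j → g k i j = 1)

/-- `g` belongs to the set `𝒢` of payoff functions. -/
def IsPayoff (g : K → ℕ → ℕ → ℝ) : Prop := ∃ L, IsPayoffL L g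

/-- `g` belongs to the set `𝒢₁` of single-agent (player 1) problems. -/
def IsPayoff1 (g : K → ℕ → ℕ → ℝ) : Prop :=
  IsPayoff g ∧ ∀ k i j j', g k i j = g k i j'

/-- Expected payoff in the Bayesian game `Γ(u,g)` when player 1 uses the behavior
strategy `σ` and player 2 uses `τ`. -/
noncomputable def payoff (u : InfoStruct K) (g : K → ℕ → ℕ → ℝ)
    (σ τ : Garbling) : ℝ :=
  ∑' (x : K × ℕ × ℕ) (i : ℕ) (j : ℕ),
    (u x).toReal * (σ x.2.1 i).toReal * (τ x.2.2 j).toReal * g x.1 i j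

/-- The value `val(u,g)` of the zero-sum Bayesian game `Γ(u,g)`
(the common value of `sup inf` and `inf sup` of the expected payoff;
we take `sup inf` as the definition). -/
noncomputable def val (u : InfoStruct K) (g : K → ℕ → ℕ → ℝ) : ℝ :=
  ⨆ σ : Garbling, ⨅ τ : Garbling, payoff u g σ τ

/-- Total variation distance `‖u − v‖`. -/
noncomputable def tv {α : Type} (u v : PMF α) : ℝ :=
  ∑' x : α, |(u x).toReal - (v x).toReal|

/-- `q.u` : player 1's signal garbled through `q`. -/
noncomputable def garbleLeft (q : Garbling) (u : InfoStruct K) : InfoStruct K :=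
  u.bind (fun x => (q x.2.1).map (fun c => (x.1, c, x.2.2)))

/-- `u.q` : player 2's signal garbled through `q`. -/
noncomputable def garbleRight (u : InfoStruct K) (q : Garbling) : InfoStruct K :=
  u.bind (fun x => (q x.2.2).map (fun d => (x.1, x.2.1, d)))

/-- The value-based distance `d(u,v) = sup_{g ∈ 𝒢} |val(u,g) − val(v,g)|`. -/
noncomputable def dVal (u v : InfoStruct K) : ℝ :=
  ⨆ g : {g : K → ℕ → ℕ → ℝ // IsPayoff g}, |val u g.1 - val v g.1|

/-- The single-agent distance `d₁(u,v) = sup_{g ∈ 𝒢₁} |val(u,g) − val(v,g)|`. -/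
noncomputable def d1 (u v : InfoStruct K) : ℝ :=
  ⨆ g : {g : K → ℕ → ℕ → ℝ // IsPayoff1 g}, |val u g.1 - val v g.1|

/-- Marginal of an information structure on `K × ℕ` (state, player 1's signal). -/
noncomputable def marg1 (u : InfoStruct K) : PMF (K × ℕ) :=
  u.map (fun x => (x.1, x.2.1))

/-- Garbling of a single-agent information structure:
`(q.w)(k,c) = Σ_s w(k,s)·q(s)({c})`. -/
noncomputable def garble1 (q : Garbling) (w : PMF (K × ℕ)) : PMF (K × ℕ) :=
  w.bind (fun x => (q x.2).map (fun c => (x.1, c)))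

/-- Marginal of an information structure on the states. -/
noncomputable def margK (u : InfoStruct K) : PMF K := u.map Prod.fst

/-- Marginal of an information structure on `K × ℕ` (state, player 2's signal). -/
noncomputable def margKD (u : InfoStruct K) : PMF (K × ℕ) :=
  u.map (fun x => (x.1, x.2.2))

/-- `σ.q` : on signal `c`, draw `c'` according to `q(c)` and play `σ(c')`. -/
noncomputable def compGarble (σ q : Garbling) : Garbling :=
  fun c => (q c).bind σ

/-- `u ∈ 𝒰(L)` : both players' signals are `< L` with probability 1. -/
def InU (L : ℕ) (u : InfoStruct K) : Prop :=
  ∀ x : K × ℕ × ℕ, u x ≠ 0 → x.2.1 < L ∧ x.2.2 < L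

/-- `q ∈ 𝒬(L)` : garbling with values supported on `{0,…,L−1}`. -/
def GarblingIn (L : ℕ) (q : Garbling) : Prop :=
  ∀ n m, q n m ≠ 0 → m < L

/-- The two players' signals are conditionally independent given the state:
`u(k)·u(k,c,d) = u(k,c)·u(k,d)` for all `k, c, d`
(equivalently `u(c,d|k) = u(c|k)·u(d|k)` whenever `u(k) > 0`). -/
def CondIndep (u : InfoStruct K) : Prop :=
  ∀ (k : K) (c d : ℕ),
    (∑' y : ℕ × ℕ, u (k, y)) * u (k, c, d)
      = (∑' d' : ℕ, u (k, c, d')) * (∑' c' : ℕ, u (k, c', d))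

end ValueDistance

namespace ValueDistance

/-!
Conditionally on the state, player 2's signal `d` is independent of everything player 1 observes in
`u'` or in `v'`. Hence against a fixed strategy `τ` of player 2, player 1 faces a decision problem
without opponent: in state `k`, action `i` pays the average of `g k i j` over `d ∼ u'(· | k)` and
`j ∼ τ d`. For `τ` optimal in `Γ(v', g)`, the value of this decision problem bounds `val(u', g)`
from above under player 1's information in `u'`, and `val(v', g)` from below under that in `v'`.

A decision problem is also a game in `𝒢` in which player 2's signal is worthless. In it `u` and `v`
are worth what player 1's information alone is worth, so the gap between the two decision values is
at most `d(u, v)`.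
-/

section Expectation

variable {α β : Type*} {C C' : ℝ}

/-- The expectation `𝔼ₚ[f] = ∑ₐ p(a) f(a)` of a real function under a discrete distribution. It is
meaningful when the series converges, in particular for bounded `f`. -/
noncomputable def expect (p : PMF α) (f : α → ℝ) : ℝ := ∑' a, (p a).toReal * f a

lemma summable_toReal_pmf (p : PMF α) : Summable fun a => (p a).toReal :=
  ENNReal.summable_toReal p.tsum_coe_ne_top

lemma tsum_toReal_pmf (p : PMF α) : ∑' a, (p a).toReal = 1 := by
  rw [← ENNReal.tsum_toReal_eq p.apply_ne_top, p.tsum_coe, ENNReal.toReal_one]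

lemma norm_toReal_mul_le (x : ENNReal) {r : ℝ} (hr : |r| ≤ C) : ‖x.toReal * r‖ ≤ x.toReal * C := by
  rw [norm_mul, Real.norm_of_nonneg ENNReal.toReal_nonneg, Real.norm_eq_abs]
  gcongr

lemma summable_toReal_mul (p : PMF α) {f : α → ℝ} (hf : ∀ a, |f a| ≤ C) :
    Summable fun a => (p a).toReal * f a :=
  .of_norm_bounded ((summable_toReal_pmf p).mul_right C) fun a => norm_toReal_mul_le _ (hf a)

lemma expect_const (p : PMF α) (c : ℝ) : expect p (fun _ => c) = c := by
  rw [expect, tsum_mul_right, tsum_toReal_pmf, one_mul]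

lemma expect_const_mul (p : PMF α) (c : ℝ) (f : α → ℝ) :
    expect p (fun a => c * f a) = c * expect p f := by
  simp only [expect, mul_left_comm _ c, tsum_mul_left]

lemma expect_add (p : PMF α) {f g : α → ℝ} (hf : ∀ a, |f a| ≤ C) (hg : ∀ a, |g a| ≤ C') :
    expect p (fun a => f a + g a) = expect p f + expect p g := by
  simp only [expect, mul_add]
  exact (summable_toReal_mul p hf).tsum_add (summable_toReal_mul p hg)

lemma expect_mono (p : PMF α) {f g : α → ℝ} (hf : ∀ a, |f a| ≤ C) (hg : ∀ a, |g a| ≤ C')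
    (h : ∀ a, f a ≤ g a) : expect p f ≤ expect p g :=
  (summable_toReal_mul p hf).tsum_le_tsum
    (fun a => mul_le_mul_of_nonneg_left (h a) ENNReal.toReal_nonneg) (summable_toReal_mul p hg)

lemma abs_expect_le (p : PMF α) {f : α → ℝ} (hf : ∀ a, |f a| ≤ C) : |expect p f| ≤ C := by
  have hbound : HasSum (fun a => (p a).toReal * C) C := by
    simpa only [tsum_mul_right, tsum_toReal_pmf, one_mul] using
      ((summable_toReal_pmf p).mul_right C).hasSum
  exact tsum_of_norm_bounded hbound fun a => norm_toReal_mul_le _ (hf a)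

lemma expect_pure (a : α) (f : α → ℝ) : expect (PMF.pure a) f = f a := by
  rw [expect, tsum_eq_single a fun b hb => by simp [PMF.pure_apply_of_ne _ _ hb]]
  simp

lemma summable_toReal_bind (p : PMF α) (q : α → PMF β) :
    Summable fun x : α × β => (p x.1).toReal * (q x.1 x.2).toReal := by
  have hnonneg : 0 ≤ fun x : α × β => (p x.1).toReal * (q x.1 x.2).toReal :=
    fun _ => mul_nonneg ENNReal.toReal_nonneg ENNReal.toReal_nonneg
  refine (summable_prod_of_nonneg hnonneg).2
    ⟨fun a => (summable_toReal_pmf (q a)).mul_left (p a).toReal, ?_⟩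
  simpa only [tsum_mul_left, tsum_toReal_pmf, mul_one] using summable_toReal_pmf p

lemma expect_bind (p : PMF α) (q : α → PMF β) {f : β → ℝ} (hf : ∀ b, |f b| ≤ C) :
    expect (p.bind q) f = expect p fun a => expect (q a) f := by
  have hterm (b : β) : (p.bind q b).toReal * f b
      = ∑' a, (p a).toReal * (q a b).toReal * f b := by
    rw [PMF.bind_apply, ENNReal.tsum_toReal_eq fun a =>
      ENNReal.mul_ne_top (p.apply_ne_top a) ((q a).apply_ne_top b), ← tsum_mul_right]
    simp only [ENNReal.toReal_mul]
  have hsum : Summable (Function.uncurry fun a b => (p a).toReal * (q a b).toReal * f b) := by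
    refine .of_norm_bounded ((summable_toReal_bind p q).mul_right C) fun x => ?_
    simpa only [Function.uncurry, ENNReal.toReal_mul] using
      norm_toReal_mul_le (p x.1 * q x.1 x.2) (hf x.2)
  simp only [expect, hterm]
  rw [hsum.tsum_comm]
  simp only [← tsum_mul_left, mul_assoc]

lemma expect_map (p : PMF α) (φ : α → β) {f : β → ℝ} (hf : ∀ b, |f b| ≤ C) :
    expect (p.map φ) f = expect p fun a => f (φ a) := by
  rw [← PMF.bind_pure_comp, expect_bind _ _ hf]
  simp only [Function.comp_apply, expect_pure]

lemma expect_comm (p : PMF α) (q : PMF β) {f : α → β → ℝ} (hf : ∀ a b, |f a b| ≤ C) :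
    expect p (fun a => expect q (f a)) = expect q fun b => expect p fun a => f a b := by
  have hf' (x : α × β) : |f x.1 x.2| ≤ C := hf x.1 x.2
  have hprod := congrArg (expect · fun x : α × β => f x.1 x.2)
    (PMF.bind_comm p q fun a b => PMF.pure (a, b))
  simpa only [expect_bind _ _ hf', expect_pure] using hprod

lemma continuousOn_expect {T : Type*} [TopologicalSpace T] (p : PMF α) {S : Set T}
    {f : T → α → ℝ} (hf : ∀ t ∈ S, ∀ a, |f t a| ≤ C) (hcont : ∀ a, Continuous fun t => f t a) :
    ContinuousOn (fun t => expect p (f t)) S :=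
  continuousOn_tsum (fun a => (continuous_const.mul (hcont a)).continuousOn)
    ((summable_toReal_pmf p).mul_right C) fun a t ht => norm_toReal_mul_le _ (hf t ht a)

end Expectation

section FiniteActions

open Matrix

variable {K S T I J : Type*} [Fintype I] [Fintype J] {C : ℝ}

/-- The vector of probabilities of a distribution on a finite set. -/
noncomputable def probVec (p : PMF I) : I → ℝ := fun i => (p i).toReal

lemma expect_eq_probVec_dotProduct (p : PMF I) (f : I → ℝ) : expect p f = probVec p ⬝ᵥ f :=
  tsum_fintype _

lemma probVec_mem_stdSimplex (p : PMF I) : probVec p ∈ stdSimplex ℝ I :=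
  ⟨fun _ => ENNReal.toReal_nonneg, (tsum_fintype _).symm.trans (tsum_toReal_pmf p)⟩

lemma exists_probVec_eq {p : I → ℝ} (hp : p ∈ stdSimplex ℝ I) : ∃ q : PMF I, probVec q = p := by
  refine ⟨PMF.ofFintype (fun i => ENNReal.ofReal (p i)) ?_,
    funext fun i => ENNReal.toReal_ofReal (hp.1 i)⟩
  rw [← ENNReal.ofReal_sum_of_nonneg fun i _ => hp.1 i, hp.2, ENNReal.ofReal_one]

lemma abs_dotProduct_le_of_mem_stdSimplex {p f : I → ℝ} (hp : p ∈ stdSimplex ℝ I)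
    (hf : ∀ i, |f i| ≤ C) : |p ⬝ᵥ f| ≤ C := by
  obtain ⟨q, rfl⟩ := exists_probVec_eq hp
  rw [← expect_eq_probVec_dotProduct]
  exact abs_expect_le q hf

/-- Behavior strategies from signals in `S` to finitely many actions `I`, as families of points of
the simplex: a compact convex set, to which Sion's minimax theorem applies. -/
def simplexStrategies (S I : Type*) [Fintype I] : Set (S → I → ℝ) :=
  Set.univ.pi fun _ => stdSimplex ℝ I

lemma convex_simplexStrategies : Convex ℝ (simplexStrategies S I) :=
  convex_pi fun _ _ => convex_stdSimplex ℝ I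

lemma isCompact_simplexStrategies : IsCompact (simplexStrategies S I) :=
  isCompact_univ_pi fun _ => isCompact_stdSimplex ℝ I

lemma simplexStrategies_nonempty [Nonempty I] : (simplexStrategies S I).Nonempty :=
  ⟨fun _ => probVec (PMF.pure (Classical.arbitrary I)), fun _ _ => probVec_mem_stdSimplex _⟩

/-- The expected payoff `𝔼ᵤ[s(c)ᵀ A(k) t(d)]` of the finite-action Bayesian game with matrix `A k`
in state `k`. -/
noncomputable def matrixPayoff (u : PMF (K × S × T)) (A : K → Matrix I J ℝ) (s : S → I → ℝ)
    (t : T → J → ℝ) : ℝ :=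
  expect u fun x => s x.2.1 ⬝ᵥ A x.1 *ᵥ t x.2.2

variable (u : PMF (K × S × T)) {A : K → Matrix I J ℝ} {s s' : S → I → ℝ} {t t' : T → J → ℝ}

lemma abs_dotProduct_mulVec_le (hA : ∀ k i j, |A k i j| ≤ C) (hs : s ∈ simplexStrategies S I)
    (ht : t ∈ simplexStrategies T J) (x : K × S × T) : |s x.2.1 ⬝ᵥ A x.1 *ᵥ t x.2.2| ≤ C :=
  abs_dotProduct_le_of_mem_stdSimplex (hs _ trivial) fun i => by
    rw [mulVec, dotProduct_comm]
    exact abs_dotProduct_le_of_mem_stdSimplex (ht _ trivial) (hA _ i)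

lemma matrixPayoff_combo_left (hA : ∀ k i j, |A k i j| ≤ C) (hs : s ∈ simplexStrategies S I)
    (hs' : s' ∈ simplexStrategies S I) (ht : t ∈ simplexStrategies T J) (a b : ℝ) :
    matrixPayoff u A (a • s + b • s') t
      = a * matrixPayoff u A s t + b * matrixPayoff u A s' t := by
  have hbound {s : S → I → ℝ} (hs : s ∈ simplexStrategies S I) (r : ℝ) (x : K × S × T) :
      |r * (s x.2.1 ⬝ᵥ A x.1 *ᵥ t x.2.2)| ≤ |r| * C := by
    rw [abs_mul]
    gcongr
    exact abs_dotProduct_mulVec_le hA hs ht x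
  simp only [matrixPayoff, Pi.add_apply, Pi.smul_apply, add_dotProduct, smul_dotProduct,
    smul_eq_mul, expect_add u (hbound hs a) (hbound hs' b), expect_const_mul]

lemma matrixPayoff_combo_right (hA : ∀ k i j, |A k i j| ≤ C) (hs : s ∈ simplexStrategies S I)
    (ht : t ∈ simplexStrategies T J) (ht' : t' ∈ simplexStrategies T J) (a b : ℝ) :
    matrixPayoff u A s (a • t + b • t')
      = a * matrixPayoff u A s t + b * matrixPayoff u A s t' := by
  have hbound {t : T → J → ℝ} (ht : t ∈ simplexStrategies T J) (r : ℝ) (x : K × S × T) :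
      |r * (s x.2.1 ⬝ᵥ A x.1 *ᵥ t x.2.2)| ≤ |r| * C := by
    rw [abs_mul]
    gcongr
    exact abs_dotProduct_mulVec_le hA hs ht x
  simp only [matrixPayoff, Pi.add_apply, Pi.smul_apply, mulVec_add, mulVec_smul, dotProduct_add,
    dotProduct_smul, smul_eq_mul, expect_add u (hbound ht a) (hbound ht' b), expect_const_mul]

lemma continuousOn_matrixPayoff_left (hA : ∀ k i j, |A k i j| ≤ C)
    (ht : t ∈ simplexStrategies T J) :
    ContinuousOn (fun s => matrixPayoff u A s t) (simplexStrategies S I) :=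
  continuousOn_expect u (fun _ hs => abs_dotProduct_mulVec_le hA hs ht) fun x => by
    unfold dotProduct
    fun_prop

lemma continuousOn_matrixPayoff_right (hA : ∀ k i j, |A k i j| ≤ C)
    (hs : s ∈ simplexStrategies S I) :
    ContinuousOn (fun t => matrixPayoff u A s t) (simplexStrategies T J) :=
  continuousOn_expect u (fun _ ht => abs_dotProduct_mulVec_le hA hs ht) fun x => by
    unfold mulVec dotProduct
    fun_prop

lemma exists_isSaddlePointOn_matrixPayoff [Nonempty I] [Nonempty J]
    (hA : ∀ k i j, |A k i j| ≤ C) :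
    ∃ t ∈ simplexStrategies T J, ∃ s ∈ simplexStrategies S I,
      IsSaddlePointOn (simplexStrategies T J) (simplexStrategies S I)
        (fun t s => matrixPayoff u A s t) t s := by
  refine Sion.exists_isSaddlePointOn simplexStrategies_nonempty convex_simplexStrategies
    isCompact_simplexStrategies
    (fun s hs => (continuousOn_matrixPayoff_right u hA hs).lowerSemicontinuousOn) (fun s hs => ?_)
    convex_simplexStrategies simplexStrategies_nonempty isCompact_simplexStrategies
    (fun t ht => (continuousOn_matrixPayoff_left u hA ht).upperSemicontinuousOn) (fun t ht => ?_)
  · exact ConvexOn.quasiconvexOn ⟨convex_simplexStrategies, fun t ht t' ht' a b _ _ _ =>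
      (matrixPayoff_combo_right u hA hs ht ht' a b).le⟩
  · exact ConcaveOn.quasiconcaveOn ⟨convex_simplexStrategies, fun s hs s' hs' a b _ _ _ =>
      (matrixPayoff_combo_left u hA hs hs' ht a b).ge⟩

end FiniteActions

variable {K : Type} {g : K → ℕ → ℕ → ℝ} {C : ℝ}

section Value

lemma payoff_eq_expect (u : InfoStruct K) (g : K → ℕ → ℕ → ℝ) (σ τ : Garbling) :
    payoff u g σ τ
      = expect u fun x => expect (σ x.2.1) fun i => expect (τ x.2.2) fun j => g x.1 i j := by
  simp only [payoff, expect, ← tsum_mul_left, mul_assoc]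

lemma abs_stagePayoff_le (hg : ∀ k i j, |g k i j| ≤ C) (σ τ : Garbling) (x : K × ℕ × ℕ) :
    |expect (σ x.2.1) fun i => expect (τ x.2.2) fun j => g x.1 i j| ≤ C :=
  abs_expect_le _ fun i => abs_expect_le _ fun j => hg x.1 i j

lemma abs_payoff_le (u : InfoStruct K) (hg : ∀ k i j, |g k i j| ≤ C) (σ τ : Garbling) :
    |payoff u g σ τ| ≤ C := by
  rw [payoff_eq_expect]
  exact abs_expect_le u (abs_stagePayoff_le hg σ τ)

lemma bddBelow_payoff (u : InfoStruct K) (hg : ∀ k i j, |g k i j| ≤ C) (σ : Garbling) :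
    BddBelow (Set.range fun τ => payoff u g σ τ) :=
  ⟨-C, Set.forall_mem_range.2 fun τ => (abs_le.1 (abs_payoff_le u hg σ τ)).1⟩

lemma abs_iInf_payoff_le (u : InfoStruct K) (hg : ∀ k i j, |g k i j| ≤ C) (σ : Garbling) :
    |⨅ τ, payoff u g σ τ| ≤ C :=
  abs_le.2 ⟨le_ciInf fun τ => (abs_le.1 (abs_payoff_le u hg σ τ)).1,
    ciInf_le_of_le (bddBelow_payoff u hg σ) default (abs_le.1 (abs_payoff_le u hg σ _)).2⟩

lemma bddAbove_iInf_payoff (u : InfoStruct K) (hg : ∀ k i j, |g k i j| ≤ C) :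
    BddAbove (Set.range fun σ => ⨅ τ, payoff u g σ τ) :=
  ⟨C, Set.forall_mem_range.2 fun σ => (abs_le.1 (abs_iInf_payoff_le u hg σ)).2⟩

lemma abs_val_le (u : InfoStruct K) (hg : ∀ k i j, |g k i j| ≤ C) : |val u g| ≤ C :=
  abs_le.2 ⟨le_ciSup_of_le (bddAbove_iInf_payoff u hg) default
    (abs_le.1 (abs_iInf_payoff_le u hg _)).1,
    ciSup_le fun σ => (abs_le.1 (abs_iInf_payoff_le u hg σ)).2⟩

lemma IsPayoff.abs_le_one (hg : IsPayoff g) (k : K) (i j : ℕ) : |g k i j| ≤ 1 :=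
  let ⟨_, hbound, _⟩ := hg
  abs_le.2 (hbound k i j)

lemma abs_val_sub_le_dVal (u v : InfoStruct K) (hg : IsPayoff g) :
    |val u g - val v g| ≤ dVal u v := by
  have hbdd : BddAbove (Set.range
      fun g : {g : K → ℕ → ℕ → ℝ // IsPayoff g} => |val u g.1 - val v g.1|) :=
    ⟨1 + 1, Set.forall_mem_range.2 fun g => (abs_sub _ _).trans
      (add_le_add (abs_val_le u g.2.abs_le_one) (abs_val_le v g.2.abs_le_one))⟩
  exact le_ciSup hbdd ⟨g, hg⟩

lemma payoff_garbleLeft (u : InfoStruct K) (κ : Garbling) (hg : ∀ k i j, |g k i j| ≤ C)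
    (σ τ : Garbling) : payoff (garbleLeft κ u) g σ τ = payoff u g (compGarble σ κ) τ := by
  simp only [payoff_eq_expect, garbleLeft, compGarble, expect_bind u _ (abs_stagePayoff_le hg σ τ),
    expect_map _ _ (abs_stagePayoff_le hg σ τ),
    expect_bind _ σ fun i => abs_expect_le _ fun j => hg _ i j]

lemma val_garbleLeft_le (u : InfoStruct K) (κ : Garbling) (hg : ∀ k i j, |g k i j| ≤ C) :
    val (garbleLeft κ u) g ≤ val u g := by
  refine ciSup_le fun σ => ?_
  simp only [payoff_garbleLeft u κ hg]
  exact le_ciSup (bddAbove_iInf_payoff u hg) (compGarble σ κ)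

end Value

section Minimax

open Matrix

variable {L : ℕ}

lemma IsPayoffL.eq_clamp (hg : IsPayoffL L g) (k : K) (i j : ℕ) :
    g k i j = g k (Fin.clamp i L) (Fin.clamp j L) := by
  obtain ⟨-, hleft, hright⟩ := hg
  rw [Fin.coe_clamp, Fin.coe_clamp]
  rcases le_or_gt L i with hi | hi
  · rw [hleft k i j hi, hleft k _ _ (le_min hi le_rfl)]
  · rw [min_eq_left hi.le]
    rcases le_or_gt L j with hj | hj
    · rw [hright k i j hi hj, hright k i _ hi (le_min hj le_rfl)]
    · rw [min_eq_left hj.le]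

/-- The payoffs of `g` in actions at most `L`. For `g` with action bound `L` nothing is lost, since
all actions from `L` on are equivalent. -/
def payoffMatrix (L : ℕ) (g : K → ℕ → ℕ → ℝ) (k : K) : Matrix (Fin (L + 1)) (Fin (L + 1)) ℝ :=
  .of fun i j => g k i j

/-- The strategy `σ` with every action above `L` replaced by `L`. -/
noncomputable def clampStrategy (L : ℕ) (σ : Garbling) : ℕ → Fin (L + 1) → ℝ :=
  fun c => probVec ((σ c).map (Fin.clamp · L))

lemma clampStrategy_mem (L : ℕ) (σ : Garbling) :
    clampStrategy L σ ∈ simplexStrategies ℕ (Fin (L + 1)) :=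
  fun _ _ => probVec_mem_stdSimplex _

lemma exists_clampStrategy_eq {s : ℕ → Fin (L + 1) → ℝ}
    (hs : s ∈ simplexStrategies ℕ (Fin (L + 1))) : ∃ σ, clampStrategy L σ = s := by
  choose q hq using fun c => exists_probVec_eq (hs c trivial)
  have hclamp : (Fin.clamp · L) ∘ Fin.val = (id : Fin (L + 1) → Fin (L + 1)) :=
    funext fun i => Fin.ext (min_eq_left i.is_le)
  refine ⟨fun c => (q c).map Fin.val, funext fun c => ?_⟩
  rw [clampStrategy, PMF.map_comp, hclamp, PMF.map_id, hq]

lemma payoff_eq_matrixPayoff (u : InfoStruct K) (hg : IsPayoffL L g) (σ τ : Garbling) :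
    payoff u g σ τ
      = matrixPayoff u (payoffMatrix L g) (clampStrategy L σ) (clampStrategy L τ) := by
  have hbound := IsPayoff.abs_le_one ⟨L, hg⟩
  have hτ (k : K) (d : ℕ) : payoffMatrix L g k *ᵥ clampStrategy L τ d
      = fun i : Fin (L + 1) => expect (τ d) fun j => g k i (Fin.clamp j L) := by
    ext i
    rw [mulVec, dotProduct_comm, clampStrategy, ← expect_eq_probVec_dotProduct]
    exact expect_map (τ d) _ fun j : Fin (L + 1) => hbound k i j
  rw [payoff_eq_expect, matrixPayoff]
  congr 1 with x
  rw [hτ, clampStrategy, ← expect_eq_probVec_dotProduct,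
    expect_map _ _ fun i : Fin (L + 1) => abs_expect_le _ fun j => hbound x.1 i _]
  exact congrArg (expect _) <| funext fun i => congrArg (expect _) <| funext <| hg.eq_clamp x.1 i

lemma exists_forall_payoff_le_val (u : InfoStruct K) (hg : IsPayoff g) :
    ∃ τ : Garbling, ∀ σ : Garbling, payoff u g σ τ ≤ val u g := by
  have hbound := hg.abs_le_one
  obtain ⟨L, hL⟩ := hg
  obtain ⟨t, ht, s, hs, hsaddle⟩ :=
    exists_isSaddlePointOn_matrixPayoff u (A := payoffMatrix L g) fun k i j => hbound k i j
  obtain ⟨τ, rfl⟩ := exists_clampStrategy_eq ht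
  obtain ⟨σ₀, rfl⟩ := exists_clampStrategy_eq hs
  refine ⟨τ, fun σ => le_ciSup_of_le (bddAbove_iInf_payoff u hbound) σ₀ <|
    le_ciInf fun τ' => ?_⟩
  rw [payoff_eq_matrixPayoff u hL, payoff_eq_matrixPayoff u hL]
  exact hsaddle _ (clampStrategy_mem L τ') _ (clampStrategy_mem L σ)

end Minimax

section DecisionProblem

variable {h : K → ℕ → ℝ}

/-- Player 1's expected payoff from `σ` in the decision problem `h` (payoff `h k i` from action `i`
in state `k`), when the state and his signal have distribution `p`. -/
noncomputable def decisionPayoff (p : PMF (K × ℕ)) (h : K → ℕ → ℝ) (σ : Garbling) : ℝ :=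
  expect p fun x => expect (σ x.2) (h x.1)

/-- The value of the decision problem `h` under the information `p`. -/
noncomputable def decisionValue (p : PMF (K × ℕ)) (h : K → ℕ → ℝ) : ℝ :=
  ⨆ σ : Garbling, decisionPayoff p h σ

/-- Decision problems with payoffs in `[-1,1]` and only finitely many useful actions, the one-player
analogue of `IsPayoff`. An action bound `L` in the sense of `IsPayoffL` would force the payoffs in
`IsPayoff1` to be constantly `1` on the actions below `L`, hence the separate notion. -/
def IsDecisionProblem (h : K → ℕ → ℝ) : Prop :=
  ∃ L, (∀ k i, |h k i| ≤ 1) ∧ ∀ k i, L ≤ i → h k i = -1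

/-- The decision problem `h` as a game in which player 2 can only concede, by an action `j ≥ L`. -/
noncomputable def gameOfDecision (L : ℕ) (h : K → ℕ → ℝ) (k : K) (i j : ℕ) : ℝ :=
  if L ≤ i then -1 else if L ≤ j then 1 else h k i

lemma bddAbove_decisionPayoff (p : PMF (K × ℕ)) (hh : ∀ k i, |h k i| ≤ C) :
    BddAbove (Set.range (decisionPayoff p h)) :=
  ⟨C, Set.forall_mem_range.2 fun _ => (abs_le.1 (abs_expect_le p fun _ =>
    abs_expect_le _ fun i => hh _ i)).2⟩

lemma isPayoff_gameOfDecision (L : ℕ) (hh : ∀ k i, |h k i| ≤ 1) :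
    IsPayoff (gameOfDecision L h) := by
  refine ⟨L, fun k i j => ?_, fun k i j hi => if_pos hi, fun k i j hi hj => ?_⟩
  · unfold gameOfDecision
    split_ifs
    · simp
    · simp
    · exact abs_le.1 (hh k i)
  · rw [gameOfDecision, if_neg hi.not_ge, if_pos hj]

lemma decisionPayoff_marg1 (u : InfoStruct K) (hh : ∀ k i, |h k i| ≤ C) (σ : Garbling) :
    decisionPayoff (marg1 u) h σ = expect u fun x => expect (σ x.2.1) (h x.1) :=
  expect_map u _ fun x => abs_expect_le _ (hh x.1)

lemma iInf_payoff_gameOfDecision (u : InfoStruct K) {L : ℕ} (hh : ∀ k i, |h k i| ≤ 1)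
    (hL : ∀ k i, L ≤ i → h k i = -1) (σ : Garbling) :
    ⨅ τ, payoff u (gameOfDecision L h) σ τ = decisionPayoff (marg1 u) h σ := by
  have hgame := (isPayoff_gameOfDecision L hh).abs_le_one
  have hle (k : K) (i j : ℕ) : h k i ≤ gameOfDecision L h k i j := by
    unfold gameOfDecision
    split_ifs with hi hj
    · exact (hL k i hi).le
    · exact (abs_le.1 (hh k i)).2
    · rfl
  have hzero (k : K) (i : ℕ) : gameOfDecision L h k i 0 = h k i := by
    unfold gameOfDecision
    split_ifs with hi hj
    · exact (hL k i hi).symm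
    · omega
    · rfl
  rw [decisionPayoff_marg1 u hh]
  apply le_antisymm
  · refine ciInf_le_of_le (bddBelow_payoff u hgame σ) (fun _ => PMF.pure 0) ?_
    simp only [payoff_eq_expect, expect_pure, hzero, le_refl]
  · refine le_ciInf fun τ => ?_
    rw [payoff_eq_expect]
    refine expect_mono u (fun x => abs_expect_le _ (hh x.1)) (abs_stagePayoff_le hgame σ τ)
      fun x => ?_
    refine expect_mono _ (hh x.1) (fun i => abs_expect_le _ (hgame x.1 i)) fun i => ?_
    calc h x.1 i = expect (τ x.2.2) fun _ => h x.1 i := (expect_const _ _).symm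
      _ ≤ expect (τ x.2.2) (gameOfDecision L h x.1 i) :=
        expect_mono _ (fun _ => hh x.1 i) (hgame x.1 i) (hle x.1 i)

lemma abs_decisionValue_sub_le_dVal (u v : InfoStruct K) (hh : IsDecisionProblem h) :
    |decisionValue (marg1 u) h - decisionValue (marg1 v) h| ≤ dVal u v := by
  obtain ⟨L, hbound, hL⟩ := hh
  have hval (w : InfoStruct K) : val w (gameOfDecision L h) = decisionValue (marg1 w) h :=
    iSup_congr (iInf_payoff_gameOfDecision w hbound hL)
  rw [← hval, ← hval]
  exact abs_val_sub_le_dVal u v (isPayoff_gameOfDecision L hbound)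

end DecisionProblem

section ConditionalIndependence

/-- The information structure in which player 1's information is `p` and player 2's signal is drawn
from `q k` in state `k`, independently of player 1's signal. -/
noncomputable def extendSignal (p : PMF (K × ℕ)) (q : K → PMF ℕ) : InfoStruct K :=
  p.bind fun x => (q x.1).map fun d => (x.1, x.2, d)

/-- The decision problem faced by player 1 in the game `g` when player 2 plays `τ` and receives a
signal drawn from `q k` in state `k`. -/
noncomputable def averagePayoff (q : K → PMF ℕ) (g : K → ℕ → ℕ → ℝ) (τ : Garbling) (k : K)
    (i : ℕ) : ℝ :=
  expect (q k) fun d => expect (τ d) (g k i)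

lemma extendSignal_apply (p : PMF (K × ℕ)) (q : K → PMF ℕ) (k : K) (c d : ℕ) :
    extendSignal p q (k, c, d) = p (k, c) * q k d := by
  rw [extendSignal, PMF.bind_apply, tsum_eq_single (k, c)]
  · rw [PMF.map_apply, tsum_eq_single d]
    · simp
    · intro d' hd'
      simp [hd'.symm]
  · rintro ⟨k', c'⟩ hne
    have : ∀ d', (k, c, d) ≠ (k', c', d') := by grind
    simp [PMF.map_apply, this]

lemma marg1_extendSignal (p : PMF (K × ℕ)) (q : K → PMF ℕ) : marg1 (extendSignal p q) = p := by
  simp only [marg1, extendSignal, PMF.map_bind, PMF.map_comp, Function.comp_def]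
  exact (congrArg p.bind (funext fun x => PMF.map_const (q x.1) x)).trans p.bind_pure

lemma marg1_apply (u : InfoStruct K) (k : K) (c : ℕ) : marg1 u (k, c) = ∑' d, u (k, c, d) := by
  rw [marg1, PMF.map_apply, ENNReal.tsum_prod', tsum_eq_single k, ENNReal.tsum_prod',
    tsum_eq_single c]
  · simp
  · intro c' hc'
    simp [hc'.symm]
  · intro k' hk'
    simp [hk'.symm]

lemma CondIndep.exists_eq_extendSignal {u : InfoStruct K} (hu : CondIndep u) :
    ∃ q : K → PMF ℕ, u = extendSignal (marg1 u) q := by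
  have hmass_ne_top (k : K) : ∑' y, u (k, y) ≠ ⊤ := by
    refine ne_top_of_le_ne_top u.tsum_coe_ne_top ?_
    rw [ENNReal.tsum_prod' (f := u)]
    exact ENNReal.le_tsum k
  have hmass (k : K) : ∑' d, ∑' c, u (k, c, d) = ∑' y, u (k, y) := by
    rw [ENNReal.tsum_comm, ENNReal.tsum_prod']
  have hcond (k : K) : ∃ q : PMF ℕ, ∀ c d, u (k, c, d) = (∑' d', u (k, c, d')) * q d := by
    rcases eq_or_ne (∑' y, u (k, y)) 0 with hzero | hpos
    · have hnull (y : ℕ × ℕ) : u (k, y) = 0 := ENNReal.tsum_eq_zero.1 hzero y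
      exact ⟨default, fun c d => by simp [hnull]⟩
    · refine ⟨PMF.normalize (fun d => ∑' c, u (k, c, d)) (by rwa [hmass])
        (by rw [hmass]; exact hmass_ne_top k), fun c d => ?_⟩
      rw [PMF.normalize_apply, hmass, ← mul_assoc, ← hu k c d, mul_comm, ← mul_assoc,
        ENNReal.inv_mul_cancel hpos (hmass_ne_top k), one_mul]
  choose q hq using hcond
  refine ⟨q, PMF.ext fun ⟨k, c, d⟩ => ?_⟩
  rw [extendSignal_apply, marg1_apply]
  exact hq k c d

lemma garbleLeft_extendSignal (κ : Garbling) (p : PMF (K × ℕ)) (q : K → PMF ℕ) :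
    garbleLeft κ (extendSignal p q) = extendSignal (garble1 κ p) q := by
  simp only [garbleLeft, extendSignal, garble1, PMF.bind_bind, Function.comp_def,
    ← PMF.bind_pure_comp, PMF.pure_bind]
  congr 1 with x
  rw [PMF.bind_comm]

lemma isDecisionProblem_averagePayoff (q : K → PMF ℕ) (hg : IsPayoff g) (τ : Garbling) :
    IsDecisionProblem (averagePayoff q g τ) := by
  have hbound := hg.abs_le_one
  obtain ⟨L, -, hL, -⟩ := hg
  refine ⟨L, fun k i => abs_expect_le _ fun d => abs_expect_le _ (hbound k i),
    fun k i hi => ?_⟩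
  simp only [averagePayoff, funext fun j => hL k i j hi, expect_const]

lemma payoff_extendSignal (p : PMF (K × ℕ)) (q : K → PMF ℕ) (hg : ∀ k i j, |g k i j| ≤ C)
    (σ τ : Garbling) :
    payoff (extendSignal p q) g σ τ = decisionPayoff p (averagePayoff q g τ) σ := by
  rw [payoff_eq_expect, extendSignal, expect_bind _ _ (abs_stagePayoff_le hg σ τ)]
  simp only [expect_map _ _ (abs_stagePayoff_le hg σ τ)]
  congr 1 with x
  exact expect_comm _ _ fun d i => abs_expect_le _ (hg x.1 i)

lemma val_extendSignal_le (p : PMF (K × ℕ)) (q : K → PMF ℕ) (hg : ∀ k i j, |g k i j| ≤ C)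
    (τ : Garbling) : val (extendSignal p q) g ≤ decisionValue p (averagePayoff q g τ) := by
  refine ciSup_le fun σ => ciInf_le_of_le (bddBelow_payoff _ hg σ) τ ?_
  rw [payoff_extendSignal p q hg]
  exact le_ciSup (bddAbove_decisionPayoff p fun k i =>
    abs_expect_le _ fun d => abs_expect_le _ (hg k i)) σ

theorem informational_complements_general {u v u' v' : InfoStruct K} {κ : Garbling}
    (hci : CondIndep u') (hv' : v' = garbleLeft κ u') (hu : marg1 u = marg1 u')
    (hv : marg1 v = marg1 v') : dVal u' v' ≤ dVal u v := by
  obtain ⟨q, hq⟩ := hci.exists_eq_extendSignal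
  have hq' : v' = extendSignal (marg1 v') q := by
    rw [hv', hq, garbleLeft_extendSignal, marg1_extendSignal]
  refine Real.iSup_le (fun ⟨g, hg⟩ => ?_) (Real.iSup_nonneg fun _ => abs_nonneg _)
  obtain ⟨τ, hτ⟩ := exists_forall_payoff_le_val v' hg
  have hmono : val v' g ≤ val u' g := hv' ▸ val_garbleLeft_le u' κ hg.abs_le_one
  have hfine : val u' g ≤ decisionValue (marg1 u') (averagePayoff q g τ) := by
    conv_lhs => rw [hq]
    exact val_extendSignal_le _ q hg.abs_le_one τ
  have hcoarse : decisionValue (marg1 v') (averagePayoff q g τ) ≤ val v' g := by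
    refine ciSup_le fun σ => ?_
    rw [← payoff_extendSignal _ q hg.abs_le_one, ← hq']
    exact hτ σ
  calc |val u' g - val v' g| = val u' g - val v' g := abs_of_nonneg (sub_nonneg.2 hmono)
    _ ≤ decisionValue (marg1 u) (averagePayoff q g τ)
        - decisionValue (marg1 v) (averagePayoff q g τ) := by
      rw [hu, hv]
      exact sub_le_sub hfine hcoarse
    _ ≤ |decisionValue (marg1 u) (averagePayoff q g τ)
        - decisionValue (marg1 v) (averagePayoff q g τ)| := le_abs_self _
    _ ≤ dVal u v := abs_decisionValue_sub_le_dVal u v (isDecisionProblem_averagePayoff q hg τ)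

end ConditionalIndependence

section Encoding

variable {P D : Type*}

lemma map_encode_apply (e : P ≃ ℕ) (w : PMF (K × P × ℕ × D)) (k : K) (p : P) (d : ℕ) :
    w.map (fun x => (x.1, e x.2.1, x.2.2.1)) (k, e p, d) = ∑' d₁, w (k, p, (d, d₁)) := by
  rw [PMF.map_apply, ENNReal.tsum_prod', tsum_eq_single k, ENNReal.tsum_prod', tsum_eq_single p,
    ENNReal.tsum_prod', tsum_eq_single d]
  · simp
  · intro d' hd'
    simp [hd'.symm]
  · intro p' hp'
    simp [hp'.symm]
  · intro k' hk'
    simp [hk'.symm]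

lemma condIndep_map_encode (e : P ≃ ℕ) (w : PMF (K × P × ℕ × D))
    (hci : ∀ (k : K) (p : P) (d : ℕ),
      (∑' y : P × ℕ × D, w (k, y)) * (∑' d₁ : D, w (k, p, (d, d₁)))
        = (∑' q : ℕ × D, w (k, p, q)) * (∑' (p' : P) (d₁ : D), w (k, p', (d, d₁)))) :
    CondIndep (w.map fun x => (x.1, e x.2.1, x.2.2.1)) := by
  intro k c d
  obtain ⟨p, rfl⟩ := e.surjective c
  simp only [ENNReal.tsum_prod', ← e.tsum_eq, map_encode_apply] at hci ⊢
  exact hci k p d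

end Encoding

/-- Informational complements: if under `w ∈ Δ(K × (C×C₁) × (D×D₁))` player
1's joint signal `(c,c₁)` and player 2's signal `d` are conditionally
independent given the state `k`, then `d(u',v') ≤ d(u,v)`, where `u` keeps
everything, `v = marg` dropping `c₁`, `u' = marg` dropping `d₁`, `v' = marg`
dropping both (product signal spaces are encoded in `ℕ` via `Nat.pair`). -/
theorem informational_complements (K : Type) [Fintype K]
    (hK : 2 ≤ Fintype.card K) (w : PMF (K × (ℕ × ℕ) × (ℕ × ℕ)))
    (hci : ∀ (k : K) (p : ℕ × ℕ) (d : ℕ),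
      (∑' y : (ℕ × ℕ) × (ℕ × ℕ), w (k, y)) * (∑' d₁ : ℕ, w (k, p, (d, d₁)))
        = (∑' q : ℕ × ℕ, w (k, p, q))
          * (∑' (p' : ℕ × ℕ) (d₁ : ℕ), w (k, p', (d, d₁)))) :
    dVal (w.map (fun x => (x.1, Nat.pair x.2.1.1 x.2.1.2, x.2.2.1)))
         (w.map (fun x => (x.1, x.2.1.1, x.2.2.1)))
      ≤ dVal (w.map (fun x => (x.1, Nat.pair x.2.1.1 x.2.1.2, Nat.pair x.2.2.1 x.2.2.2)))
             (w.map (fun x => (x.1, x.2.1.1, Nat.pair x.2.2.1 x.2.2.2))) :=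
  informational_complements_general (κ := fun n => PMF.pure n.unpair.1)
    (condIndep_map_encode Nat.pairEquiv w hci)
    (by simp [garbleLeft, Function.comp_def, ← PMF.bind_pure_comp])
    (by simp only [marg1, PMF.map_comp]; rfl)
    (by simp only [marg1, PMF.map_comp]; rfl)

end ValueDistance
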